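/- Let R be a zero-dimensional commutative ring with unity and x ∈ R. Then the image x + Nil(R) is a zero-divisor of the quotient ring R/Nil(R) if and only if x is a zero-divisor of R. -/

import Mathlib

/-!
In a zero-dimensional ring every non-unit lies in a minimal prime and is therefore a zero-divisor,
so the zero-divisors are exactly the non-units. A quotient of a zero-dimensional ring is again
zero-dimensional, and units lift along the quotient by a nil ideal.
-/

open scoped nonZeroDivisors

section CommSemiring

variable {R S : Type*} [CommSemiring R] [CommSemiring S]

theorem notMem_nonZeroDivisors_iff_exists_ne_zero {x : R} :
    x ∉ R⁰ ↔ ∃ y, y ≠ 0 ∧ x * y = 0 := by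
  simp only [notMem_nonZeroDivisors_iff_left, Set.Nonempty, Set.mem_ofPred_eq, and_comm]

variable [Ring.KrullDimLE 0 R] [Ring.KrullDimLE 0 S]

theorem mem_nonZeroDivisors_iff_isUnit_of_krullDimLE_zero {x : R} : x ∈ R⁰ ↔ IsUnit x := by
  refine ⟨fun hx ↦ ?_, IsUnit.mem_nonZeroDivisors⟩
  by_contra hunit
  obtain ⟨m, hm, hxm⟩ := exists_max_ideal_of_mem_nonunits hunit
  have hmin : m ∈ minimalPrimes R := Ideal.mem_minimalPrimes_iff_isPrime.mpr hm.isPrime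
  exact notMem_nonZeroDivisors_of_mem_mem_minimalPrimes hxm hmin hx

theorem map_mem_nonZeroDivisors_iff_of_isLocalHom (f : R →+* S) [IsLocalHom f] {x : R} :
    f x ∈ S⁰ ↔ x ∈ R⁰ := by
  simp only [mem_nonZeroDivisors_iff_isUnit_of_krullDimLE_zero, isUnit_map_iff]

end CommSemiring

section CommRing

variable {R : Type*} [CommRing R]

theorem krullDimLE_zero_quotient [Ring.KrullDimLE 0 R] (I : Ideal R) :
    Ring.KrullDimLE 0 (R ⧸ I) :=
  Ideal.krullDimLE_zero_quotient_iff_forall_minimalPrimes_isMaximal.mpr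
    fun _ hJ ↦ hJ.isPrime.isMaximal'

theorem isLocalHom_quotientMk_of_le_nilradical {I : Ideal R} (hI : I ≤ nilradical R) :
    IsLocalHom (Ideal.Quotient.mk I) :=
  isLocalHom_of_le_jacobson_bot I (hI.trans Ideal.radical_le_jacobson)

end CommRing

theorem stmt2_general {R : Type*} [CommRing R]
    (hdim : ∀ p : Ideal R, p.IsPrime → p.IsMaximal) {I : Ideal R} (hI : I ≤ nilradical R) (x : R) :
    (∃ w : R ⧸ I, w ≠ 0 ∧ Ideal.Quotient.mk I x * w = 0) ↔ ∃ y : R, y ≠ 0 ∧ x * y = 0 := by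
  have := Ring.KrullDimLE.mk₀ hdim
  have := krullDimLE_zero_quotient I
  have := isLocalHom_quotientMk_of_le_nilradical hI
  simp only [← notMem_nonZeroDivisors_iff_exists_ne_zero,
    map_mem_nonZeroDivisors_iff_of_isLocalHom]

theorem stmt2 (R : Type*) [CommRing R]
    (hdim : ∀ p : Ideal R, p.IsPrime → p.IsMaximal) (x : R) :
    (∃ w : R ⧸ nilradical R, w ≠ 0 ∧ (Ideal.Quotient.mk (nilradical R) x) * w = 0) ↔
      (∃ y : R, y ≠ 0 ∧ x * y = 0) :=
  stmt2_general hdim le_rfl x
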